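/- arXiv:2212.10350 — 2 statements merged into one kernel-verified Lean document; each statement's English description precedes it below -/
import Mathlib

section
/- Let G = (V, ℰ) be an undirected graph on V = {1, …, d}, let Γ̄ be a symmetric d×d real matrix with zero diagonal, and suppose Q̂ ∈ 𝒬 satisfies Q̂_{ij} = 0 for all {i,j} ∉ ℰ and Γ(Q̂)_{ij} = Γ̄_{ij} for all {i,j} ∈ ℰ. Then Q̂ is the unique maximizer of the surrogate log-likelihood ℓ(Q; Γ̄) = (1/2) log τ(Q) − (1/2)⟨Γ̄, Q⟩ over the set {Q ∈ 𝒬 : Q_{ij} = 0 for all {i,j} ∉ ℰ}. -/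
open Matrix Finset

/-- `Θ(Q)`: `Θ(Q)_{ij} = −Q_{ij}` for `i ≠ j` and `Θ(Q)_{ii} = ∑_{j≠i} Q_{ij}`. -/
noncomputable def thetaOf {d : ℕ} (Q : Matrix (Fin d) (Fin d) ℝ) :
    Matrix (Fin d) (Fin d) ℝ :=
  Matrix.of fun i j => if i = j then ∑ l ∈ univ.filter (fun l => l ≠ i), Q i l else -Q i j

/-- Membership in `𝒬`: symmetric, zero diagonal, and `xᵀΘ(Q)x > 0` for every nonzero
`x` with `∑ᵢ xᵢ = 0`. -/
def memQ {d : ℕ} (Q : Matrix (Fin d) (Fin d) ℝ) : Prop :=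
  Q.IsSymm ∧ (∀ i, Q i i = 0) ∧
    ∀ x : Fin d → ℝ, x ≠ 0 → (∑ i, x i) = 0 → 0 < x ⬝ᵥ (thetaOf Q).mulVec x

/-- The centering matrix `P = I − (1/d)𝟙𝟙ᵀ`. -/
noncomputable def Pmat (d : ℕ) : Matrix (Fin d) (Fin d) ℝ :=
  1 - ((d : ℝ)⁻¹) • Matrix.of (fun _ _ : Fin d => (1 : ℝ))

/-- `S` is the matrix `Σ(Q)`: the unique symmetric matrix with `Σ(Q)𝟙 = 0` and
`Θ(Q)Σ(Q) = P`. -/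
def isSigmaOf {d : ℕ} (Q S : Matrix (Fin d) (Fin d) ℝ) : Prop :=
  S.IsSymm ∧ S.mulVec (fun _ => 1) = 0 ∧ thetaOf Q * S = Pmat d

/-- The variogram associated with `Σ`: `Γ_{ij} = Σ_{ii} + Σ_{jj} − 2Σ_{ij}`. -/
noncomputable def gammaOf {d : ℕ} (S : Matrix (Fin d) (Fin d) ℝ) :
    Matrix (Fin d) (Fin d) ℝ :=
  Matrix.of fun i j => S i i + S j j - 2 * S i j

/-- The inner product `⟨A, B⟩ = ∑_{i<j} A_{ij} B_{ij}` on symmetric matrices with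
zero diagonal. -/
noncomputable def sinner {d : ℕ} (A B : Matrix (Fin d) (Fin d) ℝ) : ℝ :=
  ∑ p ∈ univ.filter (fun p : Fin d × Fin d => p.1 < p.2), A p.1 p.2 * B p.1 p.2

open Classical in
/-- The spanning tree polynomial `τ(Q) = ∑_T ∏_{{i,j}∈T} Q_{ij}`, summed over all
spanning trees of the complete graph on `{1, …, d}`. -/
noncomputable def tau {d : ℕ} (Q : Matrix (Fin d) (Fin d) ℝ) : ℝ :=
  ∑ T ∈ (univ : Finset (SimpleGraph (Fin d))).filter (fun T => T.IsTree),
    ∏ p ∈ univ.filter (fun p : Fin d × Fin d => p.1 < p.2 ∧ T.Adj p.1 p.2), Q p.1 p.2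

/-- The Cayley–Menger matrix of `Γ`. -/
noncomputable def CM {d : ℕ} (Γ : Matrix (Fin d) (Fin d) ℝ) :
    Matrix (Fin (d + 1)) (Fin (d + 1)) ℝ :=
  Matrix.of fun a b =>
    if ha : (a : ℕ) < d then
      (if hb : (b : ℕ) < d then -Γ ⟨a, ha⟩ ⟨b, hb⟩ / 2 else 1)
    else (if (b : ℕ) < d then -1 else 0)

/-- Membership in the cone `𝒞^d` of symmetric matrices with zero diagonal that are
strictly conditionally negative definite. -/
def memC {d : ℕ} (Γ : Matrix (Fin d) (Fin d) ℝ) : Prop :=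
  Γ.IsSymm ∧ (∀ i, Γ i i = 0) ∧
    ∀ x : Fin d → ℝ, x ≠ 0 → (∑ i, x i) = 0 → x ⬝ᵥ Γ.mulVec x < 0

/-!
Delete from `Θ(Q)` the row and column of a root vertex `r`. By the matrix-tree theorem the
determinant of the remaining matrix `A` is `τ(Q)`, and for `Q ∈ 𝒬` it is positive definite. If `B`
is the matrix obtained from `Q̂` in the same way, then `B⁻¹` is the covariance matrix of the
increments `X_v - X_r` when `X` has covariance `Σ(Q̂)`, which gives `⟨Γ(Q̂), Q⟩ = tr (B⁻¹ A)`. So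
the claim for `Γ̄ = Γ(Q̂)` is the inequality `log det A - log det B < tr (B⁻¹ A) - (d - 1)` for
`A ≠ B`: apply `log x ≤ x - 1`, with equality only at `x = 1`, to the eigenvalues of `B⁻¹ A`. For
`Q` supported on the edges of `G`, the pairing `⟨Γ̄, Q⟩` only sees the entries of `Γ̄` on these
edges, where it agrees with `Γ(Q̂)`.
-/

/-! ### The log-determinant inequality -/

section LogDet

open scoped ComplexOrder MatrixOrder

variable {n 𝕜 : Type*} [Fintype n] [DecidableEq n] [RCLike 𝕜] {A B M : Matrix n n 𝕜}

lemma eq_one_of_eigenvalues_eq_one (hM : M.IsHermitian) (h : ∀ i, hM.eigenvalues i = 1) :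
    M = 1 := by
  have hdiag : (RCLike.ofReal ∘ hM.eigenvalues : n → 𝕜) = fun _ => 1 := by
    ext i
    simp [h]
  rw [hM.spectral_theorem, hdiag, diagonal_one, map_one]

lemma log_re_det_eq_sum_log_eigenvalues (hM : M.PosDef) :
    Real.log (RCLike.re M.det) = ∑ i, Real.log (hM.1.eigenvalues i) := by
  rw [hM.1.det_eq_prod_eigenvalues, ← RCLike.ofReal_prod, RCLike.ofReal_re,
    Real.log_prod fun i _ => (hM.eigenvalues_pos i).ne']

lemma re_trace_sub_card_eq_sum_eigenvalues_sub_one (hM : M.IsHermitian) :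
    RCLike.re M.trace - Fintype.card n = ∑ i, (hM.eigenvalues i - 1) := by
  simp [hM.trace_eq_sum_eigenvalues]

lemma log_re_det_lt_re_trace_sub_card (hM : M.PosDef) (hne : M ≠ 1) :
    Real.log (RCLike.re M.det) < RCLike.re M.trace - Fintype.card n := by
  obtain ⟨i, hi⟩ : ∃ i, hM.1.eigenvalues i ≠ 1 := by
    by_contra! h
    exact hne (eq_one_of_eigenvalues_eq_one hM.1 h)
  rw [log_re_det_eq_sum_log_eigenvalues hM, re_trace_sub_card_eq_sum_eigenvalues_sub_one hM.1]
  exact sum_lt_sum (fun j _ => Real.log_le_sub_one_of_pos (hM.eigenvalues_pos j))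
    ⟨i, mem_univ i, Real.log_lt_sub_one_of_pos (hM.eigenvalues_pos i) hi⟩

-- `M = C A Cᴴ`, where `B⁻¹ = Cᴴ C`.
lemma exists_posDef_det_mul_det_eq (hA : A.PosDef) (hB : B.PosDef) :
    ∃ M : Matrix n n 𝕜, M.PosDef ∧ M.det * B.det = A.det ∧ M.trace = (B⁻¹ * A).trace ∧
      (M = 1 → A = B) := by
  obtain ⟨C, hC, hBC : B⁻¹ = Cᴴ * C⟩ :=
    CStarAlgebra.isStrictlyPositive_iff_eq_star_mul_self.mp hB.inv.isStrictlyPositive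
  have hBunit : IsUnit B.det := (Matrix.isUnit_iff_isUnit_det B).mp hB.isUnit
  refine ⟨C * A * Cᴴ, hA.mul_mul_conjTranspose_same (vecMul_injective_of_isUnit hC), ?_, ?_,
    fun h => ?_⟩
  · calc (C * A * Cᴴ).det * B.det = A.det * ((Cᴴ * C).det * B.det) := by
          simp only [det_mul]
          ring
      _ = A.det := by rw [← hBC, ← det_mul, nonsing_inv_mul B hBunit, det_one, mul_one]
  · rw [trace_mul_comm, hBC, Matrix.mul_assoc]
  · have hinv : A * B⁻¹ = 1 := by
      rw [Matrix.mul_assoc] at h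
      rw [hBC, ← Matrix.mul_assoc]
      exact mul_eq_one_comm.mp h
    calc A = A * B⁻¹ * B := (nonsing_inv_mul_cancel_right B A hBunit).symm
      _ = B := by rw [hinv, Matrix.one_mul]

lemma log_re_det_sub_lt_re_trace_inv_mul_sub_card (hA : A.PosDef) (hB : B.PosDef) (hne : A ≠ B) :
    Real.log (RCLike.re A.det) - Real.log (RCLike.re B.det) <
      RCLike.re (B⁻¹ * A).trace - Fintype.card n := by
  obtain ⟨M, hM, hdet, htr, hone⟩ := exists_posDef_det_mul_det_eq hA hB
  have hMdet := RCLike.pos_iff.mp hM.det_pos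
  have hBdet := RCLike.pos_iff.mp hB.det_pos
  have hlog : Real.log (RCLike.re A.det) =
      Real.log (RCLike.re M.det) + Real.log (RCLike.re B.det) := by
    rw [← hdet, RCLike.mul_re, hBdet.2, mul_zero, sub_zero,
      Real.log_mul hMdet.1.ne' hBdet.1.ne']
  rw [hlog, add_sub_cancel_right, ← htr]
  exact log_re_det_lt_re_trace_sub_card hM (mt hone hne)

end LogDet

/-! ### Rooted trees -/

section ParentMap

variable {V : Type*} {r : V} {f g : {v // v ≠ r} → V}

/-- `f` is the parent map of a tree with root `r`: there is no infinite sequence of successive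
parents, so that on a finite vertex set iterating `f` from any vertex ends at `r`. -/
def IsParentMap (f : {v // v ≠ r} → V) : Prop :=
  WellFounded fun w v => ∃ h : v ≠ r, f ⟨v, h⟩ = w

/-- The graph that joins every vertex other than `r` to its image under `f`. -/
def parentGraph (f : {v // v ≠ r} → V) : SimpleGraph V :=
  SimpleGraph.fromEdgeSet (Set.range fun v : {v // v ≠ r} => s(↑v, f v))

lemma IsParentMap.apply_ne (hf : IsParentMap f) (v : {v // v ≠ r}) : f v ≠ v :=
  fun h => hf.irrefl.irrefl v.1 ⟨v.2, h⟩

lemma IsParentMap.apply_ne_of_apply_eq (hf : IsParentMap f) {u v : {v // v ≠ r}} (h : f v = u) :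
    f u ≠ v :=
  fun h' => hf.asymmetric _ _ ⟨v.2, h⟩ ⟨u.2, h'⟩

lemma IsParentMap.parent_adj (hf : IsParentMap f) (v : {v // v ≠ r}) :
    (parentGraph f).Adj v (f v) :=
  (SimpleGraph.fromEdgeSet_adj _).mpr ⟨⟨v, rfl⟩, (hf.apply_ne v).symm⟩

lemma IsParentMap.edgeSet_parentGraph (hf : IsParentMap f) :
    (parentGraph f).edgeSet = Set.range fun v : {v // v ≠ r} => s(↑v, f v) := by
  rw [parentGraph, SimpleGraph.edgeSet_fromEdgeSet, sdiff_eq_left, Set.disjoint_left]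
  rintro _ ⟨v, rfl⟩ hdiag
  exact hf.apply_ne v (Sym2.mk_isDiag_iff.mp hdiag).symm

lemma IsParentMap.edge_injective (hf : IsParentMap f) :
    Function.Injective fun v : {v // v ≠ r} => s(↑v, f v) := by
  intro u v huv
  rcases Sym2.eq_iff.mp huv with ⟨h, _⟩ | ⟨h, h'⟩
  · exact Subtype.ext h
  · exact absurd h.symm (hf.apply_ne_of_apply_eq h')

lemma IsParentMap.parentGraph_connected (hf : IsParentMap f) : (parentGraph f).Connected := by
  have hroot : ∀ v, (parentGraph f).Reachable v r := by
    intro v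
    induction v using hf.induction with
    | _ v ih =>
      by_cases hv : v = r
      · rw [hv]
      · exact (hf.parent_adj ⟨v, hv⟩).reachable.trans (ih _ ⟨hv, rfl⟩)
  exact (SimpleGraph.connected_iff_exists_forall_reachable _).mpr ⟨r, fun v => (hroot v).symm⟩

lemma IsParentMap.parentGraph_isTree [Finite V] (hf : IsParentMap f) :
    (parentGraph f).IsTree := by
  classical
  have := Fintype.ofFinite V
  rw [SimpleGraph.isTree_iff_connected_and_card]
  refine ⟨hf.parentGraph_connected, ?_⟩
  rw [hf.edgeSet_parentGraph, Nat.card_range_of_injective hf.edge_injective,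
    Nat.card_eq_fintype_card, Nat.card_eq_fintype_card, Fintype.card_subtype_compl,
    Fintype.card_subtype_eq]
  exact Nat.sub_add_cancel (Fintype.card_pos_iff.mpr ⟨r⟩)

lemma IsParentMap.eq_of_parentGraph_eq (hf : IsParentMap f)
    (h : parentGraph f = parentGraph g) : f = g := by
  have hvalue : ∀ v (hv : v ≠ r), f ⟨v, hv⟩ = g ⟨v, hv⟩ := by
    intro v
    induction v using hf.induction with
    | _ v ih =>
      intro hv
      have hadj := hf.parent_adj ⟨v, hv⟩
      rw [h, parentGraph, SimpleGraph.fromEdgeSet_adj] at hadj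
      obtain ⟨⟨u, hu⟩, -⟩ := hadj
      rcases Sym2.eq_iff.mp hu with ⟨huv, hgu⟩ | ⟨hufv, hgu⟩
      · rw [← hgu]
        exact congrArg g (Subtype.ext huv)
      · have hfu : f u = g u := ih u ⟨hv, hufv.symm⟩ u.2
        exact absurd (hfu.trans hgu) (hf.apply_ne_of_apply_eq hufv.symm)
  exact funext fun v => hvalue v v.2

lemma exists_adj_dist_lt {G : SimpleGraph V} (hG : G.Connected) {v : V} (hv : v ≠ r) :
    ∃ w, G.Adj v w ∧ G.dist w r < G.dist v r := by
  obtain ⟨p, hp⟩ := hG.exists_walk_length_eq_dist v r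
  cases p with
  | nil => exact absurd rfl hv
  | cons hadj q =>
    have hq := SimpleGraph.dist_le q
    rw [SimpleGraph.Walk.length_cons] at hp
    exact ⟨_, hadj, by lia⟩

lemma exists_isParentMap_parentGraph_eq {T : SimpleGraph V} (hT : T.IsTree) (r : V) :
    ∃ f : {v // v ≠ r} → V, IsParentMap f ∧ parentGraph f = T := by
  choose f hadj hdist using fun v : {v // v ≠ r} => exists_adj_dist_lt hT.connected v.2
  have hf : IsParentMap f := by
    refine Subrelation.wf ?_ (measure fun v => T.dist v r).wf
    rintro _ v ⟨hv, rfl⟩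
    exact hdist ⟨v, hv⟩
  have hle : parentGraph f ≤ T := by
    rw [← SimpleGraph.edgeSet_subset_edgeSet, hf.edgeSet_parentGraph]
    rintro _ ⟨v, rfl⟩
    exact hadj v
  exact ⟨f, hf, hle.antisymm
    ((SimpleGraph.isTree_iff_minimal_connected.mp hT).2 hf.parentGraph_connected hle)⟩

end ParentMap

/-! ### Laplacians and the matrix-tree theorem -/

section WeightedLaplacian

variable {V R : Type*}

/-- The principal submatrix obtained by deleting the row and the column of the root `r`. -/
abbrev deleteRoot (A : Matrix V V R) (r : V) : Matrix {v // v ≠ r} {v // v ≠ r} R :=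
  A.submatrix (↑) (↑)

variable [Fintype V]

lemma sum_row_eq_zero_of_mulVec_one_eq_zero [NonAssocSemiring R] {A : Matrix V V R}
    (hA : A *ᵥ 1 = 0) (v : V) : ∑ w, A v w = 0 := by
  simpa [mulVec, dotProduct] using congrFun hA v

lemma eq_of_deleteRoot_eq [Ring R] {A B : Matrix V V R} {r : V} (hA : A.IsSymm) (hB : B.IsSymm)
    (hA1 : A *ᵥ 1 = 0) (hB1 : B *ᵥ 1 = 0) (h : deleteRoot A r = deleteRoot B r) : A = B := by
  classical
  have hrow : ∀ v, A v r + ∑ w : {w // w ≠ r}, A v w = B v r + ∑ w : {w // w ≠ r}, B v w := by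
    intro v
    simp only [← Fintype.sum_eq_add_sum_subtype_ne, sum_row_eq_zero_of_mulVec_one_eq_zero hA1,
      sum_row_eq_zero_of_mulVec_one_eq_zero hB1]
  have hcol : ∀ v, v ≠ r → A v r = B v r := by
    intro v hv
    have hsum : ∑ w : {w // w ≠ r}, A v w = ∑ w : {w // w ≠ r}, B v w :=
      Fintype.sum_congr _ _ fun w => congrFun₂ h ⟨v, hv⟩ w
    exact add_right_cancel (hsum ▸ hrow v)
  have hcorner : A r r = B r r := by
    have hsum : ∑ w : {w // w ≠ r}, A r w = ∑ w : {w // w ≠ r}, B r w :=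
      Fintype.sum_congr _ _ fun w => by rw [← hA.apply, ← hB.apply, hcol w w.2]
    exact add_right_cancel (hsum ▸ hrow r)
  ext v w
  by_cases hv : v = r <;> by_cases hw : w = r
  · rw [hv, hw, hcorner]
  · rw [hv, ← hA.apply, ← hB.apply, hcol w hw]
  · rw [hw, hcol v hv]
  · exact congrFun₂ h ⟨v, hv⟩ ⟨w, hw⟩

variable [DecidableEq V]

lemma deleteRoot_mul_deleteRoot [NonUnitalNonAssocSemiring R] {A B : Matrix V V R} {r : V}
    (hB : ∀ w, B r w = 0) : deleteRoot A r * deleteRoot B r = deleteRoot (A * B) r := by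
  ext v w
  simp [Matrix.mul_apply, Fintype.sum_eq_add_sum_subtype_ne _ r, hB]

lemma trace_deleteRoot [AddCommMonoid R] {A : Matrix V V R} {r : V} (hA : A r r = 0) :
    (deleteRoot A r).trace = A.trace := by
  simp [Matrix.trace, Fintype.sum_eq_add_sum_subtype_ne _ r, hA]

/-- The Laplacian of the digraph on `V` in which the edge from `v` to `w` has weight `Q v w`. The
diagonal entries of `Q` cancel. -/
def weightedLaplacian [AddCommGroup R] (Q : Matrix V V R) : Matrix V V R :=
  diagonal (fun v => ∑ w, Q v w) - Q

lemma weightedLaplacian_mulVec_one [Ring R] (Q : Matrix V V R) : weightedLaplacian Q *ᵥ 1 = 0 := by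
  ext v
  simp [weightedLaplacian, mulVec, dotProduct, diagonal_apply]

lemma weightedLaplacian_isSymm [AddCommGroup R] {Q : Matrix V V R} (hQ : Q.IsSymm) :
    (weightedLaplacian Q).IsSymm :=
  (isSymm_diagonal _).sub hQ

lemma eq_of_weightedLaplacian_eq [AddCommGroup R] {Q Q' : Matrix V V R} (hQ : ∀ v, Q v v = 0)
    (hQ' : ∀ v, Q' v v = 0) (h : weightedLaplacian Q = weightedLaplacian Q') : Q = Q' := by
  ext v w
  rcases eq_or_ne v w with rfl | hvw
  · rw [hQ, hQ']
  · simpa [weightedLaplacian, hvw] using congrFun₂ h v w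

end WeightedLaplacian

section MatrixTree

variable {V R : Type*} [Fintype V] [DecidableEq V] [CommRing R] {r : V} {f : {v // v ≠ r} → V}

lemma det_eq_zero_of_mulVec_eq_zero_of_apply_eq_one {n : Type*} [Fintype n] [DecidableEq n]
    {M : Matrix n n R} {y : n → R} {i : n} (hy : M *ᵥ y = 0) (hi : y i = 1) : M.det = 0 := by
  have hdet : M.det • y = 0 := by
    rw [← one_mulVec y, ← smul_mulVec, ← adjugate_mul, ← mulVec_mulVec, hy, mulVec_zero]
  simpa [hi] using congrFun hdet i

lemma det_sum_smul_rows {n ι : Type*} [Fintype n] [DecidableEq n] [Fintype ι]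
    (c : n → ι → R) (u : n → ι → n → R) :
    det (of fun i => ∑ l, c i l • u i l) =
      ∑ f : n → ι, (∏ i, c i (f i)) * det (of fun i => u i (f i)) := by
  classical
  refine ((detRowAlternating (R := R) (n := n)).toMultilinearMap.map_sum _).trans ?_
  exact sum_congr rfl fun f _ => MultilinearMap.map_smul_univ _ _ _

/-- The Laplacian, with the row and the column of `r` deleted, of the digraph whose edges go from
each `v ≠ r` to `f v`. -/
def parentMatrix (R : Type*) [CommRing R] (f : {v // v ≠ r} → V) :
    Matrix {v // v ≠ r} {v // v ≠ r} R :=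
  1 - of fun v w : {v // v ≠ r} => if f v = w then 1 else 0

lemma det_parentMatrix_of_isParentMap (hf : IsParentMap f) : (parentMatrix R f).det = 1 := by
  classical
  have := isWellFounded_iff _ _ |>.mpr hf
  let depth : {v // v ≠ r} → Ordinal :=
    fun v => IsWellFounded.rank (fun w v => ∃ h : v ≠ r, f ⟨v, h⟩ = w) v.1
  have hentry : ∀ v w, depth v ≤ depth w → parentMatrix R f v w = (1 : Matrix _ _ R) v w := by
    intro v w hvw
    have hne : f v ≠ w := fun h => hvw.not_gt (IsWellFounded.rank_lt_of_rel ⟨v.2, h⟩)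
    simp [parentMatrix, hne]
  have htri : BlockTriangular (parentMatrix R f) (OrderDual.toDual ∘ depth) := by
    intro v w hvw
    have hlt : depth v < depth w := hvw
    rw [hentry v w hlt.le, one_apply_ne (ne_of_apply_ne depth hlt.ne)]
  rw [htri.det]
  refine prod_eq_one fun a _ => ?_
  have hblock : (parentMatrix R f).toSquareBlock (OrderDual.toDual ∘ depth) a = 1 := by
    ext ⟨v, hv⟩ ⟨w, hw⟩
    have hdepth : depth v = depth w := OrderDual.toDual.injective (hv.trans hw.symm)
    simp [toSquareBlock_def, hentry v w hdepth.le, one_apply]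
  rw [hblock, det_one]

-- The indicator of the vertices from which the root is not reached is constant along the edges
-- `v ↦ f v` and vanishes at the root, so it lies in the kernel.
lemma det_parentMatrix_of_not_isParentMap (hf : ¬IsParentMap f) :
    (parentMatrix R f).det = 0 := by
  classical
  let Reaches : V → Prop := Acc fun w v => ∃ h : v ≠ r, f ⟨v, h⟩ = w
  let y : V → R := fun v => if Reaches v then 0 else 1
  obtain ⟨u, hu⟩ : ∃ u, ¬Reaches u := by
    by_contra! h
    exact hf ⟨h⟩
  have hroot : Reaches r := ⟨r, fun _ ⟨h, _⟩ => absurd rfl h⟩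
  have hstep : ∀ v : {v // v ≠ r}, y (f v) = y v := by
    intro v
    have hiff : Reaches (f v) ↔ Reaches v :=
      ⟨fun h => ⟨v.1, fun _ ⟨_, hw⟩ => hw ▸ h⟩, fun h => h.inv ⟨v.2, rfl⟩⟩
    simp only [y, hiff]
  have hur : u ≠ r := fun h => hu (h ▸ hroot)
  refine det_eq_zero_of_mulVec_eq_zero_of_apply_eq_one (y := fun v => y v) (i := ⟨u, hur⟩) ?_
    (if_neg hu)
  have hsum : ∀ v, ∑ w : {w // w ≠ r}, (if f v = w then y w else 0) = y (f v) := by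
    intro v
    have hall : ∑ w, (if f v = w then y w else 0) = y (f v) := by simp
    have hyr : y r = 0 := if_pos hroot
    simpa [Fintype.sum_eq_add_sum_subtype_ne _ r, hyr] using hall
  ext v
  simp [parentMatrix, mulVec, dotProduct, sub_mul, one_apply, hsum, hstep]

lemma deleteRoot_weightedLaplacian_eq_of_sum_smul (Q : Matrix V V R) (r : V) :
    deleteRoot (weightedLaplacian Q) r =
      of fun v : {v // v ≠ r} => ∑ w, Q v w • fun u : {v // v ≠ r} =>
        (1 : Matrix {v // v ≠ r} {v // v ≠ r} R) v u - if w = u then 1 else 0 := by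
  ext v u
  simp [weightedLaplacian, diagonal_apply, one_apply, mul_sub, Subtype.ext_iff]

open Classical in
lemma det_deleteRoot_weightedLaplacian_eq_sum_isParentMap (Q : Matrix V V R) (r : V) :
    (deleteRoot (weightedLaplacian Q) r).det =
      ∑ f : {v // v ≠ r} → V with IsParentMap f, ∏ v : {v // v ≠ r}, Q v (f v) := by
  have hdet : (deleteRoot (weightedLaplacian Q) r).det =
      ∑ f : {v // v ≠ r} → V, (∏ v : {v // v ≠ r}, Q v (f v)) * (parentMatrix R f).det := by
    rw [deleteRoot_weightedLaplacian_eq_of_sum_smul, det_sum_smul_rows]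
    rfl
  rw [hdet, sum_filter]
  refine sum_congr rfl fun f _ => ?_
  split_ifs with hf
  · rw [det_parentMatrix_of_isParentMap hf, mul_one]
  · rw [det_parentMatrix_of_not_isParentMap hf, mul_zero]

lemma IsParentMap.prod_edgeFinset [Fintype (parentGraph f).edgeSet] (hf : IsParentMap f)
    (c : Sym2 V → R) :
    ∏ e ∈ (parentGraph f).edgeFinset, c e = ∏ v : {v // v ≠ r}, c s(↑v, f v) := by
  refine (prod_bij (fun v _ => s(↑v, f v)) (fun v _ => ?_) (fun u _ v _ h => hf.edge_injective h)
    (fun e he => ?_) fun _ _ => rfl).symm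
  · exact SimpleGraph.mem_edgeFinset.mpr (hf.parent_adj v)
  · rw [SimpleGraph.mem_edgeFinset, hf.edgeSet_parentGraph] at he
    obtain ⟨v, hv⟩ := he
    exact ⟨v, mem_univ v, hv⟩

open Classical in
theorem det_deleteRoot_weightedLaplacian_eq_sum_isTree (c : Sym2 V → R) (r : V) :
    (deleteRoot (weightedLaplacian (of fun v w => c s(v, w))) r).det =
      ∑ T : SimpleGraph V with T.IsTree, ∏ e ∈ T.edgeFinset, c e := by
  rw [det_deleteRoot_weightedLaplacian_eq_sum_isParentMap]
  refine sum_bij (fun f _ => parentGraph f) (fun f hf => ?_) (fun f hf g _ h => ?_)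
    (fun T hT => ?_) fun f hf => ?_
  · exact mem_filter_univ _ |>.mpr ((mem_filter_univ _).mp hf).parentGraph_isTree
  · exact ((mem_filter_univ _).mp hf).eq_of_parentGraph_eq h
  · obtain ⟨f, hf, hfT⟩ := exists_isParentMap_parentGraph_eq ((mem_filter_univ _).mp hT) r
    exact ⟨f, (mem_filter_univ _).mpr hf, hfT⟩
  · exact (((mem_filter_univ _).mp hf).prod_edgeFinset c).symm

end MatrixTree

/-! ### Positive definiteness and covariances of increments -/

section RootedCovariance

variable {V R : Type*}

/-- The covariance matrix of the increments `X v - X r` when `X` has covariance matrix `S`. -/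
def rootedCovariance [AddGroup R] (S : Matrix V V R) (r : V) : Matrix V V R :=
  of fun v w => S v w - S v r - S r w + S r r

lemma rootedCovariance_root_left [AddCommGroup R] (S : Matrix V V R) (r w : V) :
    rootedCovariance S r r w = 0 := by
  simp [rootedCovariance]

lemma rootedCovariance_root_right [AddGroup R] (S : Matrix V V R) (r v : V) :
    rootedCovariance S r v r = 0 := by
  simp [rootedCovariance]

lemma rootedCovariance_isSymm [AddCommGroup R] {S : Matrix V V R} (hS : S.IsSymm) (r : V) :
    (rootedCovariance S r).IsSymm := by
  refine IsSymm.ext fun v w => ?_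
  simp only [rootedCovariance, of_apply, hS.apply r, hS.apply v w]
  abel

variable [Fintype V]

lemma posDef_deleteRoot {A : Matrix V V ℝ} (hA : A.IsSymm) (hA1 : A *ᵥ 1 = 0)
    (hpos : ∀ x : V → ℝ, x ≠ 0 → ∑ v, x v = 0 → 0 < x ⬝ᵥ A *ᵥ x) (r : V) :
    (deleteRoot A r).PosDef := by
  classical
  refine PosDef.of_dotProduct_mulVec_pos (hA.submatrix _) fun x hx => ?_
  let z : V → ℝ := fun v => if h : v = r then 0 else x ⟨v, h⟩
  let c : ℝ := (∑ v, z v) / Fintype.card V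
  have hzr : z r = 0 := dif_pos rfl
  have hzx : ∀ v : {v // v ≠ r}, z v = x v := fun v => dif_neg v.2
  have hcentred : ∑ v, (z - c • 1) v = 0 := by
    have hcard : (Fintype.card V : ℝ) ≠ 0 :=
      Nat.cast_ne_zero.mpr (Fintype.card_pos_iff.mpr ⟨r⟩).ne'
    simp [c, mul_div_cancel₀ _ hcard]
  have hne : z - c • 1 ≠ 0 := by
    intro h
    have hc : c = 0 := by simpa [hzr] using congrFun h r
    exact hx (funext fun v => by simpa [hc, hzx] using congrFun h v)
  have hshift : (z - c • 1) ⬝ᵥ A *ᵥ (z - c • 1) = z ⬝ᵥ A *ᵥ z := by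
    have h1A : 1 ᵥ* A = 0 := by rw [← mulVec_transpose, hA.eq, hA1]
    rw [mulVec_sub, mulVec_smul, hA1, smul_zero, sub_zero, sub_dotProduct, smul_dotProduct,
      dotProduct_mulVec 1, h1A, zero_dotProduct, smul_zero, sub_zero]
  have hrestrict : z ⬝ᵥ A *ᵥ z = x ⬝ᵥ deleteRoot A r *ᵥ x := by
    simp [dotProduct, mulVec, Fintype.sum_eq_add_sum_subtype_ne _ r, hzr, hzx]
  simpa [hshift, hrestrict] using hpos _ hne hcentred

lemma mul_rootedCovariance_apply [Ring R] {A : Matrix V V R} (hA : A *ᵥ 1 = 0)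
    (S : Matrix V V R) (r v w : V) :
    (A * rootedCovariance S r) v w = (A * S) v w - (A * S) v r := by
  have hrow := sum_row_eq_zero_of_mulVec_one_eq_zero hA v
  simp [Matrix.mul_apply, rootedCovariance, mul_add, mul_sub, sum_add_distrib, ← sum_mul, hrow]

variable [DecidableEq V]

lemma deleteRoot_mul_deleteRoot_rootedCovariance [Ring R] {A S : Matrix V V R} {a : V → R}
    (hA : A *ᵥ 1 = 0) (hAS : A * S = 1 - vecMulVec a 1) (r : V) :
    deleteRoot A r * deleteRoot (rootedCovariance S r) r = 1 := by
  rw [deleteRoot_mul_deleteRoot (rootedCovariance_root_left S r)]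
  ext v w
  simp [mul_rootedCovariance_apply hA, hAS, one_apply, v.2, Subtype.ext_iff]

lemma trace_deleteRoot_mul_deleteRoot_rootedCovariance [Ring R] (A S : Matrix V V R) (r : V) :
    (deleteRoot A r * deleteRoot (rootedCovariance S r) r).trace =
      (A * rootedCovariance S r).trace := by
  rw [deleteRoot_mul_deleteRoot (rootedCovariance_root_left S r), trace_deleteRoot]
  simp [Matrix.mul_apply, rootedCovariance_root_right]

lemma two_mul_trace_weightedLaplacian_mul [CommRing R] {Q : Matrix V V R} (hQ : Q.IsSymm)
    (S : Matrix V V R) :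
    2 * (weightedLaplacian Q * S).trace =
      ∑ v, ∑ w, (S v v + S w w - 2 * S v w) * Q v w := by
  have htrace : (weightedLaplacian Q * S).trace =
      ∑ v, ∑ w, S v v * Q v w - ∑ v, ∑ w, S w v * Q v w := by
    rw [weightedLaplacian, Matrix.sub_mul, trace_sub]
    simp only [Matrix.trace, diag_apply, diagonal_mul]
    simp only [Matrix.mul_apply, mul_sum, mul_comm]
  have hdiag : ∑ v, ∑ w, S w w * Q v w = ∑ v, ∑ w, S v v * Q v w := by
    rw [sum_comm]
    simp only [hQ.apply]
  have hoff : ∑ v, ∑ w, S v w * Q v w = ∑ v, ∑ w, S w v * Q v w := by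
    rw [sum_comm]
    simp only [hQ.apply]
  simp only [add_mul, sub_mul, sum_add_distrib, sum_sub_distrib, mul_assoc, ← mul_sum, hdiag, hoff,
    htrace]
  ring

end RootedCovariance

/-! ### Sums over unordered pairs -/

section UnorderedPairs

variable {ι M : Type*} [Fintype ι] [LinearOrder ι]

lemma sum_sum_eq_two_nsmul_sum_lt [AddCommMonoid M] {F : ι → ι → M}
    (hsymm : ∀ i j, F i j = F j i) (hdiag : ∀ i, F i i = 0) :
    ∑ i, ∑ j, F i j = 2 • ∑ p : ι × ι with p.1 < p.2, F p.1 p.2 := by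
  have hsplit : ∀ i j, F i j = (if i < j then F i j else 0) + if j < i then F j i else 0 := by
    intro i j
    rcases lt_trichotomy i j with h | rfl | h
    · simp [h, h.not_gt]
    · simp [hdiag]
    · simp [h, h.not_gt, hsymm i j]
  calc ∑ i, ∑ j, F i j
      = ∑ i, ∑ j, (if i < j then F i j else 0) + ∑ i, ∑ j, if j < i then F j i else 0 := by
        simp only [← sum_add_distrib, ← hsplit]
    _ = 2 • ∑ i, ∑ j, if i < j then F i j else 0 := by
        rw [two_nsmul, sum_comm (f := fun i j => if j < i then F j i else 0)]
    _ = 2 • ∑ p : ι × ι with p.1 < p.2, F p.1 p.2 := by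
        rw [sum_filter, Fintype.sum_prod_type]

lemma prod_edgeFinset_eq_prod_lt [CommMonoid M] (G : SimpleGraph ι) [Fintype G.edgeSet]
    [DecidableRel G.Adj] (c : Sym2 ι → M) :
    ∏ e ∈ G.edgeFinset, c e = ∏ p : ι × ι with p.1 < p.2 ∧ G.Adj p.1 p.2, c s(p.1, p.2) := by
  refine (prod_bij (fun p _ => s(p.1, p.2)) (fun p hp => ?_) (fun p hp q hq h => ?_)
    (fun e he => ?_) fun _ _ => rfl).symm
  · exact SimpleGraph.mem_edgeFinset.mpr ((mem_filter_univ _).mp hp).2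
  · rcases Sym2.eq_iff.mp h with ⟨h₁, h₂⟩ | ⟨h₁, h₂⟩
    · exact Prod.ext h₁ h₂
    · have hp' := ((mem_filter_univ _).mp hp).1
      have hq' := ((mem_filter_univ _).mp hq).1
      exact absurd hq' (h₁ ▸ h₂ ▸ hp'.not_gt)
  · induction e with
    | _ v w =>
      have hadj : G.Adj v w := SimpleGraph.mem_edgeFinset.mp he
      rcases lt_or_gt_of_ne hadj.ne with hlt | hlt
      · exact ⟨(v, w), (mem_filter_univ _).mpr ⟨hlt, hadj⟩, rfl⟩
      · exact ⟨(w, v), (mem_filter_univ _).mpr ⟨hlt, hadj.symm⟩, Sym2.eq_swap⟩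

end UnorderedPairs

/-! ### The surrogate log-likelihood -/

section Surrogate

variable {d : ℕ} {Γ Γ' Q Qh S : Matrix (Fin d) (Fin d) ℝ}

lemma thetaOf_eq_weightedLaplacian (Q : Matrix (Fin d) (Fin d) ℝ) :
    thetaOf Q = weightedLaplacian Q := by
  ext i j
  rcases eq_or_ne i j with rfl | hij
  · simp [thetaOf, weightedLaplacian, filter_ne', ← sum_erase_eq_sub]
  · simp [thetaOf, weightedLaplacian, hij]

lemma tau_eq_det_deleteRoot_thetaOf (hQ : Q.IsSymm) (r : Fin d) :
    tau Q = (deleteRoot (thetaOf Q) r).det := by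
  classical
  let c : Sym2 (Fin d) → ℝ := Sym2.lift ⟨fun i j => Q i j, fun i j => hQ.apply j i⟩
  rw [thetaOf_eq_weightedLaplacian]
  refine Eq.trans ?_ (det_deleteRoot_weightedLaplacian_eq_sum_isTree c r).symm
  simp only [prod_edgeFinset_eq_prod_lt]
  simp [tau, c]

lemma memQ.posDef_deleteRoot_thetaOf (hQ : memQ Q) (r : Fin d) :
    (deleteRoot (thetaOf Q) r).PosDef := by
  obtain ⟨hsymm, -, hpos⟩ := hQ
  rw [thetaOf_eq_weightedLaplacian] at hpos ⊢
  exact posDef_deleteRoot (weightedLaplacian_isSymm hsymm) (weightedLaplacian_mulVec_one Q) hpos r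

lemma memQ.eq_of_deleteRoot_thetaOf_eq (hQ : memQ Q) (hQh : memQ Qh) {r : Fin d}
    (h : deleteRoot (thetaOf Q) r = deleteRoot (thetaOf Qh) r) : Q = Qh := by
  rw [thetaOf_eq_weightedLaplacian, thetaOf_eq_weightedLaplacian] at h
  exact eq_of_weightedLaplacian_eq hQ.2.1 hQh.2.1 <|
    eq_of_deleteRoot_eq (weightedLaplacian_isSymm hQ.1) (weightedLaplacian_isSymm hQh.1)
      (weightedLaplacian_mulVec_one Q) (weightedLaplacian_mulVec_one Qh) h

lemma isSigmaOf.inv_deleteRoot_thetaOf (hS : isSigmaOf Qh S) (r : Fin d) :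
    (deleteRoot (thetaOf Qh) r)⁻¹ = deleteRoot (rootedCovariance S r) r := by
  have hP : Pmat d = 1 - vecMulVec (fun _ => (d : ℝ)⁻¹) 1 := by
    ext i j
    simp [Pmat]
  refine inv_eq_right_inv (deleteRoot_mul_deleteRoot_rootedCovariance ?_ (hS.2.2.trans hP) r)
  rw [thetaOf_eq_weightedLaplacian, weightedLaplacian_mulVec_one]

lemma gammaOf_rootedCovariance (S : Matrix (Fin d) (Fin d) ℝ) (r : Fin d) (hS : S.IsSymm) :
    gammaOf (rootedCovariance S r) = gammaOf S := by
  ext i j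
  simp only [gammaOf, rootedCovariance, of_apply, hS.apply r]
  ring

lemma sinner_gammaOf_eq_trace (hS : S.IsSymm) (hQ : Q.IsSymm) :
    sinner (gammaOf S) Q = (thetaOf Q * S).trace := by
  have hpairs := sum_sum_eq_two_nsmul_sum_lt (F := fun i j => gammaOf S i j * Q i j)
    (fun i j => by simp only [gammaOf, of_apply, hS.apply i j, hQ.apply i j]; ring)
    (fun i => by simp only [gammaOf, of_apply]; ring)
  have htrace := two_mul_trace_weightedLaplacian_mul hQ S
  rw [thetaOf_eq_weightedLaplacian]
  simp only [gammaOf, of_apply, nsmul_eq_mul, Nat.cast_ofNat] at hpairs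
  simp only [sinner, gammaOf, of_apply]
  linarith

lemma isSigmaOf.sinner_gammaOf_eq_trace_inv_mul (hS : isSigmaOf Qh S) (hQ : Q.IsSymm)
    (r : Fin d) : sinner (gammaOf S) Q =
      ((deleteRoot (thetaOf Qh) r)⁻¹ * deleteRoot (thetaOf Q) r).trace := by
  rw [hS.inv_deleteRoot_thetaOf r, trace_mul_comm,
    trace_deleteRoot_mul_deleteRoot_rootedCovariance,
    ← sinner_gammaOf_eq_trace (rootedCovariance_isSymm hS.1 r) hQ,
    gammaOf_rootedCovariance S r hS.1]

/-- The surrogate log-likelihood `ℓ(Q; Γ) = (1/2) log τ(Q) − (1/2)⟨Γ, Q⟩`. -/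
noncomputable def surrogateLogLikelihood (Γ Q : Matrix (Fin d) (Fin d) ℝ) : ℝ :=
  (1 / 2) * Real.log (tau Q) - (1 / 2) * sinner Γ Q

lemma surrogateLogLikelihood_gammaOf_lt (hQ : memQ Q) (hQh : memQ Qh) (hS : isSigmaOf Qh S)
    (hne : Q ≠ Qh) :
    surrogateLogLikelihood (gammaOf S) Q < surrogateLogLikelihood (gammaOf S) Qh := by
  obtain ⟨r⟩ : Nonempty (Fin d) := by
    by_contra! h
    exact hne (Subsingleton.elim Q Qh)
  have hlogdet := log_re_det_sub_lt_re_trace_inv_mul_sub_card (hQ.posDef_deleteRoot_thetaOf r)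
    (hQh.posDef_deleteRoot_thetaOf r) (mt (hQ.eq_of_deleteRoot_thetaOf_eq hQh (r := r)) hne)
  have hself : sinner (gammaOf S) Qh = Fintype.card {v // v ≠ r} := by
    rw [hS.sinner_gammaOf_eq_trace_inv_mul hQh.1 r, nonsing_inv_mul _
      ((Matrix.isUnit_iff_isUnit_det _).mp (hQh.posDef_deleteRoot_thetaOf r).isUnit), trace_one]
  simp only [RCLike.re_to_real, ← tau_eq_det_deleteRoot_thetaOf hQ.1,
    ← tau_eq_det_deleteRoot_thetaOf hQh.1, ← hS.sinner_gammaOf_eq_trace_inv_mul hQ.1,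
    ← hself] at hlogdet
  simp only [surrogateLogLikelihood]
  linarith

lemma surrogateLogLikelihood_congr_of_adj {G : SimpleGraph (Fin d)}
    (hΓ : ∀ i j, G.Adj i j → Γ i j = Γ' i j) (hQ : ∀ i j, i ≠ j → ¬G.Adj i j → Q i j = 0) :
    surrogateLogLikelihood Γ Q = surrogateLogLikelihood Γ' Q := by
  have hpairing : sinner Γ Q = sinner Γ' Q := by
    refine sum_congr rfl fun p hp => ?_
    by_cases hadj : G.Adj p.1 p.2
    · rw [hΓ _ _ hadj]
    · rw [hQ _ _ (mem_filter.mp hp).2.ne hadj, mul_zero, mul_zero]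
  rw [surrogateLogLikelihood, surrogateLogLikelihood, hpairing]

end Surrogate

/-- Step (S1): if `Q̂ ∈ 𝒬` vanishes off the edges of `G` and its variogram matches `Γ̄`
on the edges of `G`, then `Q̂` is the unique maximizer of the surrogate log-likelihood
`ℓ(Q; Γ̄) = (1/2) log τ(Q) − (1/2)⟨Γ̄, Q⟩` over `{Q ∈ 𝒬 : Q_{ij} = 0 for ij ∉ ℰ}`. -/
theorem surrogate_mle_graphical {d : ℕ} (G : SimpleGraph (Fin d))
    (Γbar Qh S : Matrix (Fin d) (Fin d) ℝ)
    (hΓsym : Γbar.IsSymm) (hΓdiag : ∀ i, Γbar i i = 0)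
    (hQh : memQ Qh)
    (hQhzero : ∀ i j, i ≠ j → ¬G.Adj i j → Qh i j = 0)
    (hS : isSigmaOf Qh S)
    (hmatch : ∀ i j, G.Adj i j → gammaOf S i j = Γbar i j) :
    (∀ Q, memQ Q → (∀ i j, i ≠ j → ¬G.Adj i j → Q i j = 0) →
        (1 / 2) * Real.log (tau Q) - (1 / 2) * sinner Γbar Q ≤
          (1 / 2) * Real.log (tau Qh) - (1 / 2) * sinner Γbar Qh) ∧
    (∀ Q, memQ Q → (∀ i j, i ≠ j → ¬G.Adj i j → Q i j = 0) →
        (1 / 2) * Real.log (tau Q) - (1 / 2) * sinner Γbar Q =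
          (1 / 2) * Real.log (tau Qh) - (1 / 2) * sinner Γbar Qh → Q = Qh) := by
  have hlt : ∀ Q, memQ Q → (∀ i j, i ≠ j → ¬G.Adj i j → Q i j = 0) → Q ≠ Qh →
      surrogateLogLikelihood Γbar Q < surrogateLogLikelihood Γbar Qh := by
    intro Q hQ hQzero hne
    rw [← surrogateLogLikelihood_congr_of_adj hmatch hQzero,
      ← surrogateLogLikelihood_congr_of_adj hmatch hQhzero]
    exact surrogateLogLikelihood_gammaOf_lt hQ hQh hS hne
  refine ⟨fun Q hQ hQzero => ?_, fun Q hQ hQzero heq => ?_⟩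
  · rcases eq_or_ne Q Qh with rfl | hne
    · rfl
    · exact (hlt Q hQ hQzero hne).le
  · by_contra hne
    exact (hlt Q hQ hQzero hne).ne heq
end

section
/- Let Q̂ be a symmetric d×d real matrix with zero diagonal, let Ψ be a finite set of ordered triples (i,j,k) of pairwise distinct indices in {1, …, d}, and let η̌ = (η̌_{ijk})_{(i,j,k)∈Ψ} be reals with Q(η̌) ∈ 𝒬, where Q(η̌)_{ab} = Q̂_{ab} + ∑_{(i,j,k)∈Ψ} η̌_{ijk}·(1 if {a,b} = {i,j}, −1 if {a,b} = {i,k}, −1 if {a,b} = {j,k}, 0 otherwise). Write Γ̌ = Γ(Q(η̌)). Suppose the KKT conditions hold: (i) primal feasibility, Γ̌_{ij} ≤ Γ̌_{ik} + Γ̌_{jk} for all (i,j,k) ∈ Ψ; (ii) dual feasibility, η̌_{ijk} ≥ 0 for all (i,j,k) ∈ Ψ; (iii) complementary slackness, ∑_{(i,j,k)∈Ψ} η̌_{ijk}(Γ̌_{ij} − Γ̌_{ik} − Γ̌_{jk}) = 0. Then Γ̌ is the unique minimizer of the primal objective Γ ↦ ⟨Γ, Q̂⟩ − log det(CM(Γ))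 over the feasible set {Γ ∈ 𝒞^d : Γ_{ij} ≤ Γ_{ik} + Γ_{jk} for all (i,j,k) ∈ Ψ}. -/
open Matrix Finset

/-- Coefficient of the triangle-inequality constraint `g_{ijk}` in the entry `(a,b)`:
`1` if `{a,b} = {i,j}`, `−1` if `{a,b} = {i,k}`, `−1` if `{a,b} = {j,k}`, `0` else. -/
noncomputable def triCoeff {d : ℕ} (i j k a b : Fin d) : ℝ :=
  if (a = i ∧ b = j) ∨ (a = j ∧ b = i) then 1
  else if (a = i ∧ b = k) ∨ (a = k ∧ b = i) then -1
  else if (a = j ∧ b = k) ∨ (a = k ∧ b = j) then -1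
  else 0

/-- The matrix `Q(η) = Q̂ + ∑_{(i,j,k)∈Ψ} η_{ijk} ∇_Γ g_{ijk}`. -/
noncomputable def Qeta {d : ℕ} (Qh : Matrix (Fin d) (Fin d) ℝ)
    (Ψ : Finset (Fin d × Fin d × Fin d)) (η : Fin d × Fin d × Fin d → ℝ) :
    Matrix (Fin d) (Fin d) ℝ :=
  Matrix.of fun a b => Qh a b + ∑ t ∈ Ψ, η t * triCoeff t.1 t.2.1 t.2.2 a b


/-!
For `Q ∈ 𝒬` the matrix `Γ(Q)` is the strict minimizer of `Γ ↦ ⟨Γ, Q⟩ − log det CM(Γ)` over the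
whole cone `𝒞^d`. Indeed every `Γ ∈ 𝒞^d` is the variogram of a symmetric `T` with `T𝟙 = 0` that is
positive definite on `𝟙^⊥`; then `det CM(Γ) = det (T + 𝟙𝟙ᵀ)`, the matrix `Σ(Q) + 𝟙𝟙ᵀ` has inverse
`Θ(Q) + d⁻²𝟙𝟙ᵀ`, and `⟨Γ, Q⟩ = tr (Θ(Q) T)`, so the claim is the tangent-plane inequality of the
strictly concave function `log det` at `Σ(Q) + 𝟙𝟙ᵀ`. The constrained problem reduces to this one
because `⟨Γ, Q(η)⟩ − log det CM(Γ)` is the Lagrangian: it is at most the primal objective on the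
feasible set, with equality at `Γ̌` by complementary slackness.
-/

section LogDet

variable {n : Type*} [Fintype n] [DecidableEq n]

lemma exists_eigenvalues_ne_one {𝕜 : Type*} [RCLike 𝕜] {M : Matrix n n 𝕜} (hM : M.IsHermitian)
    (hne : M ≠ 1) : ∃ i, hM.eigenvalues i ≠ 1 := by
  by_contra! h
  have hdiag : (diagonal (RCLike.ofReal ∘ hM.eigenvalues) : Matrix n n 𝕜) = 1 := by
    rw [← diagonal_one]
    congr 1
    ext i
    simp [h i]
  exact hne <| by rw [hM.spectral_theorem, hdiag, map_one]

lemma log_det_lt_trace_sub_card {M : Matrix n n ℝ} (hM : M.PosDef) (hne : M ≠ 1) :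
    Real.log M.det < M.trace - Fintype.card n := by
  obtain ⟨i, hi⟩ := exists_eigenvalues_ne_one hM.isHermitian hne
  calc
    Real.log M.det = ∑ i, Real.log (hM.isHermitian.eigenvalues i) := by
      rw [hM.isHermitian.det_eq_prod_eigenvalues]
      exact Real.log_prod fun i _ => (hM.eigenvalues_pos i).ne'
    _ < ∑ i, (hM.isHermitian.eigenvalues i - 1) :=
      sum_lt_sum (fun i _ => Real.log_le_sub_one_of_pos (hM.eigenvalues_pos i))
        ⟨i, mem_univ i, Real.log_lt_sub_one_of_pos (hM.eigenvalues_pos i) hi⟩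
    _ = M.trace - Fintype.card n := by
      simp [hM.isHermitian.trace_eq_sum_eigenvalues, sum_sub_distrib]

open scoped MatrixOrder in
lemma log_det_lt_add_trace {A B : Matrix n n ℝ} (hA : A.PosDef) (hB : B.PosDef) (hne : B ≠ A) :
    Real.log B.det < Real.log A.det + (A⁻¹ * (B - A)).trace := by
  obtain ⟨C, hC, hinv⟩ := CStarAlgebra.isStrictlyPositive_iff_eq_star_mul_self.mp
    hA.inv.isStrictlyPositive
  have hA_unit : IsUnit A.det := hA.det_pos.ne'.isUnit
  have hM : (C * B * star C).PosDef := (IsUnit.posDef_star_right_conjugate_iff hC).mpr hB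
  have hM_ne : C * B * star C ≠ 1 := fun h => hne <| by
    have hAB : A⁻¹ * B = 1 := by
      rw [hinv, Matrix.mul_assoc, mul_eq_one_comm, h]
    rw [← mul_nonsing_inv_cancel_left A B hA_unit, hAB, Matrix.mul_one]
  have hM_det : (C * B * star C).det = B.det / A.det := by
    rw [det_mul_comm, ← Matrix.mul_assoc, ← hinv, det_mul, det_nonsing_inv, Ring.inverse_eq_inv',
      inv_mul_eq_div]
  have hM_trace : (C * B * star C).trace - Fintype.card n = (A⁻¹ * (B - A)).trace := by
    rw [trace_mul_comm, ← Matrix.mul_assoc, ← hinv, Matrix.mul_sub, nonsing_inv_mul A hA_unit,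
      trace_sub, trace_one]
  have hlog := log_det_lt_trace_sub_card hM hM_ne
  rw [hM_det, Real.log_div hB.det_pos.ne' hA.det_pos.ne', hM_trace] at hlog
  linarith

end LogDet

section Bordered

variable {n R : Type*} [CommRing R]

/-- The matrix `A` bordered by a column of ones, a row of minus ones and a zero corner: the
Cayley–Menger matrix of `Γ` is, up to reindexing, `bordered (-Γ / 2)`. -/
def bordered (A : Matrix n n R) : Matrix (n ⊕ Fin 1) (n ⊕ Fin 1) R :=
  fromBlocks A (replicateCol (Fin 1) 1) (-replicateRow (Fin 1) 1) 0

variable [Fintype n] [DecidableEq n]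

lemma det_bordered_add_vecMulVec (A : Matrix n n R) (u w : n → R) :
    (bordered (A + vecMulVec u 1 + vecMulVec 1 w)).det = (bordered A).det := by
  have hfactor : bordered (A + vecMulVec u 1 + vecMulVec 1 w) =
      fromBlocks 1 (-replicateCol (Fin 1) u) 0 1 * bordered A *
        fromBlocks 1 0 (replicateRow (Fin 1) w) 1 := by
    have hcol_mul_row (u w : n → R) :
        replicateCol (Fin 1) u * replicateRow (Fin 1) w = vecMulVec u w :=
      (vecMulVec_eq (Fin 1) u w).symm
    simp [bordered, fromBlocks_multiply, hcol_mul_row, -vecMulVec_one, -one_vecMulVec]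
  rw [hfactor, det_mul, det_mul, det_fromBlocks_zero₂₁, det_fromBlocks_zero₁₂]
  simp

lemma det_bordered_of_mulVec_eq_one {A : Matrix n n R} {v : n → R} (hv : A *ᵥ v = 1) :
    (bordered A).det = A.det * ∑ i, v i := by
  have hfactor : bordered A =
      fromBlocks A 0 (-replicateRow (Fin 1) 1) (of fun _ _ => ∑ i, v i) *
        fromBlocks 1 (replicateCol (Fin 1) v) 0 1 := by
    simp only [bordered, fromBlocks_multiply, ← replicateCol_mulVec, hv]
    congr 1
    · simp
    · simp
    · simp
    · ext
      simp [neg_mulVec, mulVec, dotProduct]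
  rw [hfactor, det_mul, det_fromBlocks_zero₁₂, det_fromBlocks_zero₂₁]
  simp

lemma det_bordered_of_mulVec_one_eq_zero {K : Type*} [Field K] [CharZero K] [Nonempty n]
    {S : Matrix n n K} (hS : S *ᵥ 1 = 0) :
    (bordered S).det = (S + vecMulVec 1 1).det := by
  have hcard : (Fintype.card n : K) ≠ 0 := Nat.cast_ne_zero.mpr Fintype.card_ne_zero
  have hv : (S + vecMulVec 1 1) *ᵥ ((Fintype.card n : K)⁻¹ • 1) = 1 := by
    simp [mulVec_smul, add_mulVec, hS, vecMulVec_mulVec, inv_smul_smul₀ hcard,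
      -MulOpposite.op_natCast, -vecMulVec_one, -one_vecMulVec]
  have hdet : (bordered (S + vecMulVec 1 1)).det = (bordered S).det := by
    simpa [-vecMulVec_one, -one_vecMulVec] using det_bordered_add_vecMulVec S 1 0
  rw [← hdet, det_bordered_of_mulVec_eq_one hv]
  simp [hcard, -vecMulVec_one, -one_vecMulVec]

end Bordered

lemma det_CM {d : ℕ} (Γ : Matrix (Fin d) (Fin d) ℝ) :
    (CM Γ).det = (bordered (-(1 / 2 : ℝ) • Γ)).det := by
  have hblocks : (CM Γ).submatrix finSumFinEquiv finSumFinEquiv = bordered (-(1 / 2 : ℝ) • Γ) := by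
    ext (i | i) (j | j)
    · simp only [CM, bordered, submatrix_apply, finSumFinEquiv_apply_left, of_apply,
        Fin.val_castAdd, Fin.is_lt, dif_pos, Fin.eta, fromBlocks_apply₁₁, Matrix.smul_apply,
        smul_eq_mul]
      ring
    all_goals simp [CM, bordered]
  rw [← hblocks, det_submatrix_equiv_self]

section Centered

variable {n : Type*} [Fintype n]

lemma dotProduct_add_vecMulVec_mulVec {R : Type*} [CommRing R] (A : Matrix n n R) (u w : n → R)
    {x : n → R} (hx : ∑ i, x i = 0) :
    x ⬝ᵥ (A + vecMulVec u 1 + vecMulVec 1 w) *ᵥ x = x ⬝ᵥ A *ᵥ x := by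
  simp [add_mulVec, vecMulVec_mulVec, one_dotProduct, dotProduct_one, dotProduct_add, hx,
    -vecMulVec_one, -one_vecMulVec]

lemma one_vecMul_eq_zero {R : Type*} [CommRing R] {S : Matrix n n R} (hS : S.IsSymm)
    (hS1 : S *ᵥ 1 = 0) : 1 ᵥ* S = 0 := by
  rw [← hS.eq, vecMul_transpose, hS1]

lemma exists_add_vecMulVec_mulVec_one_eq_zero {K : Type*} [Field K] [CharZero K]
    (A : Matrix n n K) : ∃ u : n → K, (A + vecMulVec u 1 + vecMulVec 1 u) *ᵥ 1 = 0 := by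
  have hmulVec (u : n → K) : (A + vecMulVec u 1 + vecMulVec 1 u) *ᵥ 1 =
      A *ᵥ 1 + (Fintype.card n : K) • u + (∑ i, u i) • 1 := by
    ext
    simp [add_mulVec, vecMulVec_mulVec, dotProduct_one, op_smul_eq_smul,
      -MulOpposite.op_natCast, -vecMulVec_one, -one_vecMulVec]
  set c := (Fintype.card n : K) with hc
  set s := ∑ i, (A *ᵥ 1) i with hs
  set u : n → K := fun i => s / (2 * c ^ 2) - (A *ᵥ 1) i / c with hu
  refine ⟨u, funext fun i => ?_⟩
  have : Nonempty n := ⟨i⟩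
  have hc0 : c ≠ 0 := Nat.cast_ne_zero.mpr Fintype.card_ne_zero
  have hsum : ∑ i, u i = -s / (2 * c) := by
    simp only [hu, sum_sub_distrib, ← sum_div, ← hs, sum_const, card_univ, nsmul_eq_mul, ← hc]
    field_simp
    ring
  simp only [hmulVec, hsum, Pi.add_apply, Pi.smul_apply, smul_eq_mul, Pi.one_apply, Pi.zero_apply]
  simp only [hu]
  field_simp
  ring

/-- A symmetric matrix annihilating `𝟙` and positive definite on `𝟙^⊥`: the common type of the
matrices `Θ(Q)` and `Σ(Q)` for `Q ∈ 𝒬`. -/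
structure IsCenteredPosDef (S : Matrix n n ℝ) : Prop where
  isSymm : S.IsSymm
  mulVec_one : S *ᵥ 1 = 0
  dotProduct_mulVec_pos : ∀ x : n → ℝ, x ≠ 0 → ∑ i, x i = 0 → 0 < x ⬝ᵥ S *ᵥ x

namespace IsCenteredPosDef

variable {S : Matrix n n ℝ}

lemma dotProduct_mulVec_nonneg (hS : IsCenteredPosDef S) (x : n → ℝ) : 0 ≤ x ⬝ᵥ S *ᵥ x := by
  set m : ℝ := (∑ i, x i) / Fintype.card n with hm
  have hshift : x ⬝ᵥ S *ᵥ x = (x - m • 1) ⬝ᵥ S *ᵥ (x - m • 1) := by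
    simp [mulVec_sub, mulVec_smul, hS.mulVec_one, sub_dotProduct, dotProduct_mulVec 1,
      one_vecMul_eq_zero hS.isSymm hS.mulVec_one]
  rw [hshift]
  obtain hzero | hne := eq_or_ne (x - m • 1) 0
  · simp [hzero]
  · obtain ⟨i, -⟩ := Function.ne_iff.mp hne
    have : Nonempty n := ⟨i⟩
    refine (hS.dotProduct_mulVec_pos _ hne ?_).le
    simp [sum_sub_distrib, hm, mul_div_cancel₀]

lemma posDef_add_vecMulVec_one (hS : IsCenteredPosDef S) : (S + vecMulVec 1 1).PosDef := by
  have hsymm : (S + vecMulVec 1 1).IsSymm := hS.isSymm.add (transpose_vecMulVec 1 1)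
  refine PosDef.of_dotProduct_mulVec_pos (by simpa using hsymm) fun x hx => ?_
  have hquad : x ⬝ᵥ (S + vecMulVec 1 1) *ᵥ x = x ⬝ᵥ S *ᵥ x + (∑ i, x i) ^ 2 := by
    simp [add_mulVec, vecMulVec_mulVec, one_dotProduct, dotProduct_one, dotProduct_add, sq,
      -vecMulVec_one, -one_vecMulVec]
  rw [star_trivial, hquad]
  obtain hsum | hsum := eq_or_ne (∑ i, x i) 0
  · exact add_pos_of_pos_of_nonneg (hS.dotProduct_mulVec_pos x hx hsum) (sq_nonneg _)
  · exact add_pos_of_nonneg_of_pos (hS.dotProduct_mulVec_nonneg x) (by positivity)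

end IsCenteredPosDef

end Centered

section Theta

variable {d : ℕ} {Q S T : Matrix (Fin d) (Fin d) ℝ}

lemma thetaOf_eq_diagonal_sub (hQ : ∀ i, Q i i = 0) : thetaOf Q = diagonal (Q *ᵥ 1) - Q := by
  ext i j
  obtain rfl | hij := eq_or_ne i j
  · simp [thetaOf, hQ, mulVec, dotProduct, filter_ne']
  · simp [thetaOf, hij]

lemma memQ.isCenteredPosDef_thetaOf (hQ : memQ Q) : IsCenteredPosDef (thetaOf Q) where
  isSymm := by
    rw [thetaOf_eq_diagonal_sub hQ.2.1]
    exact (isSymm_diagonal _).sub hQ.1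
  mulVec_one := by
    ext i
    simp [thetaOf_eq_diagonal_sub hQ.2.1, sub_mulVec, mulVec_diagonal]
  dotProduct_mulVec_pos := hQ.2.2

lemma Pmat_eq_one_sub_vecMulVec (d : ℕ) : Pmat d = 1 - (d : ℝ)⁻¹ • vecMulVec 1 1 := by
  ext i j
  simp [Pmat, vecMulVec_apply, -vecMulVec_one, -one_vecMulVec]

lemma isSigmaOf.isCenteredPosDef (hQ : memQ Q) (hS : isSigmaOf Q S) : IsCenteredPosDef S where
  isSymm := hS.1
  mulVec_one := hS.2.1
  dotProduct_mulVec_pos x hx hsum := by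
    have hΘSx : thetaOf Q *ᵥ (S *ᵥ x) = x := by
      simp [mulVec_mulVec, hS.2.2, Pmat_eq_one_sub_vecMulVec, sub_mulVec, smul_mulVec,
        vecMulVec_mulVec, one_dotProduct, hsum, -vecMulVec_one, -one_vecMulVec]
    have hSx_ne : S *ᵥ x ≠ 0 := fun h => hx <| by rw [← hΘSx, h, mulVec_zero]
    have hSx_sum : ∑ i, (S *ᵥ x) i = 0 := by
      rw [← one_dotProduct, dotProduct_mulVec, one_vecMul_eq_zero hS.1 hS.2.1, zero_dotProduct]
    simpa only [hΘSx, dotProduct_comm] using hQ.2.2 (S *ᵥ x) hSx_ne hSx_sum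

lemma isSigmaOf.inv_add_vecMulVec_one [NeZero d] (hQ : memQ Q) (hS : isSigmaOf Q S) :
    (S + vecMulVec 1 1)⁻¹ = thetaOf Q + ((d : ℝ) ^ 2)⁻¹ • vecMulVec 1 1 := by
  have hd : (d : ℝ) ≠ 0 := NeZero.ne _
  have hscalar : ((d : ℝ) ^ 2)⁻¹ * d = (d : ℝ)⁻¹ := by field_simp
  apply inv_eq_left_inv
  simp [add_mul, mul_add, mul_vecMulVec, vecMulVec_mulVec, vecMulVec_mul,
    hQ.isCenteredPosDef_thetaOf.mulVec_one, one_vecMul_eq_zero hS.1 hS.2.1, hS.2.2,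
    Pmat_eq_one_sub_vecMulVec, smul_smul, hscalar, -MulOpposite.op_natCast, -vecMulVec_one,
    -one_vecMulVec]

end Theta

section Variogram

variable {d : ℕ} {A B Q S Γ : Matrix (Fin d) (Fin d) ℝ}

lemma gammaOf_isSymm (hS : S.IsSymm) : (gammaOf S).IsSymm :=
  IsSymm.ext fun i j => by
    simp only [gammaOf, of_apply, hS.apply i j]
    ring

lemma gammaOf_apply_self (S : Matrix (Fin d) (Fin d) ℝ) (i : Fin d) : gammaOf S i i = 0 := by
  simp only [gammaOf, of_apply]
  ring

lemma gammaOf_neg_half_smul_add (hΓ : ∀ i, Γ i i = 0) (u : Fin d → ℝ) :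
    gammaOf (-(1 / 2 : ℝ) • Γ + vecMulVec u 1 + vecMulVec 1 u) = Γ := by
  ext i j
  simp only [gammaOf, of_apply, Matrix.add_apply, Matrix.smul_apply, vecMulVec_apply,
    Pi.one_apply, smul_eq_mul, hΓ]
  ring

lemma neg_half_smul_gammaOf (S : Matrix (Fin d) (Fin d) ℝ) :
    -(1 / 2 : ℝ) • gammaOf S =
      S + vecMulVec (-(1 / 2 : ℝ) • S.diag) 1 + vecMulVec 1 (-(1 / 2 : ℝ) • S.diag) := by
  ext i j
  simp only [gammaOf, of_apply, Matrix.add_apply, Matrix.smul_apply, vecMulVec_apply,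
    Pi.smul_apply, Pi.one_apply, diag_apply, smul_eq_mul]
  ring

lemma dotProduct_gammaOf_mulVec (S : Matrix (Fin d) (Fin d) ℝ) {x : Fin d → ℝ}
    (hx : ∑ i, x i = 0) : x ⬝ᵥ gammaOf S *ᵥ x = -2 * (x ⬝ᵥ S *ᵥ x) := by
  have h := dotProduct_add_vecMulVec_mulVec S (-(1 / 2 : ℝ) • S.diag) (-(1 / 2 : ℝ) • S.diag) hx
  rw [← neg_half_smul_gammaOf, smul_mulVec, dotProduct_smul, smul_eq_mul] at h
  linarith

lemma IsCenteredPosDef.memC_gammaOf (hS : IsCenteredPosDef S) : memC (gammaOf S) := by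
  refine ⟨gammaOf_isSymm hS.isSymm, gammaOf_apply_self S, fun x hx hsum => ?_⟩
  rw [dotProduct_gammaOf_mulVec S hsum]
  linarith [hS.dotProduct_mulVec_pos x hx hsum]

lemma memC.exists_gammaOf_eq (hΓ : memC Γ) : ∃ S, IsCenteredPosDef S ∧ gammaOf S = Γ := by
  obtain ⟨hsymm, hdiag, hneg⟩ := hΓ
  obtain ⟨u, hu⟩ := exists_add_vecMulVec_mulVec_one_eq_zero (-(1 / 2 : ℝ) • Γ)
  refine ⟨_, ⟨?_, hu, fun x hx hsum => ?_⟩, gammaOf_neg_half_smul_add hdiag u⟩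
  · simp [IsSymm, transpose_vecMulVec, hsymm.eq, add_right_comm, -vecMulVec_one, -one_vecMulVec]
  · rw [dotProduct_add_vecMulVec_mulVec _ _ _ hsum, smul_mulVec, dotProduct_smul, smul_eq_mul]
    linarith [hneg x hx hsum]

lemma det_CM_gammaOf [NeZero d] (hS : S *ᵥ 1 = 0) :
    (CM (gammaOf S)).det = (S + vecMulVec 1 1).det := by
  rw [det_CM, neg_half_smul_gammaOf, det_bordered_add_vecMulVec,
    det_bordered_of_mulVec_one_eq_zero hS]

lemma two_mul_sinner (hA : A.IsSymm) (hB : B.IsSymm) (hA0 : ∀ i, A i i = 0) :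
    2 * sinner A B = (A * B).trace := by
  have hlt : sinner A B = ∑ i, ∑ j, if i < j then A i j * B j i else 0 := by
    simp [sinner, sum_filter, Fintype.sum_prod_type, hB.apply]
  have hgt : sinner A B = ∑ i, ∑ j, if j < i then A i j * B j i else 0 := by
    rw [hlt, sum_comm]
    simp only [hA.apply, hB.apply]
  have hsplit (i j : Fin d) : A i j * B j i =
      (if i < j then A i j * B j i else 0) + if j < i then A i j * B j i else 0 := by
    obtain h | rfl | h := lt_trichotomy i j
    · simp [h, h.not_gt]
    · simp [hA0]
    · simp [h, h.not_gt]
  calc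
    2 * sinner A B = sinner A B + sinner A B := two_mul _
    _ = ∑ i, ∑ j, A i j * B j i := by
      nth_rewrite 1 [hlt]
      simp only [hgt, ← sum_add_distrib, ← hsplit]
    _ = (A * B).trace := by simp [trace, Matrix.mul_apply]

lemma sinner_gammaOf (hQ : Q.IsSymm) (hQ0 : ∀ i, Q i i = 0) (hS : S.IsSymm) :
    sinner (gammaOf S) Q = (thetaOf Q * S).trace := by
  have hgamma : gammaOf S = vecMulVec S.diag 1 + vecMulVec 1 S.diag - (2 : ℝ) • S := by
    ext i j
    simp [gammaOf, vecMulVec_apply, -vecMulVec_one, -one_vecMulVec]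
  have htrace : (gammaOf S * Q).trace = 2 * (S.diag ⬝ᵥ Q *ᵥ 1 - (Q * S).trace) := by
    have hQ1 : 1 ᵥ* Q = Q *ᵥ 1 := by rw [← vecMul_transpose, hQ.eq]
    simp only [hgamma, sub_mul, add_mul, vecMulVec_mul, trace_sub, trace_add, trace_vecMulVec,
      smul_mul_assoc, trace_smul, smul_eq_mul, hQ1, trace_mul_comm S Q, ← dotProduct_mulVec,
      dotProduct_comm 1]
    ring
  have htheta : (thetaOf Q * S).trace = S.diag ⬝ᵥ Q *ᵥ 1 - (Q * S).trace := by
    rw [thetaOf_eq_diagonal_sub hQ0, sub_mul, trace_sub]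
    simp [trace, dotProduct, mul_comm]
  linarith [two_mul_sinner (gammaOf_isSymm hS) hQ (gammaOf_apply_self S)]

end Variogram

section Optimality

variable {d : ℕ}

/-- The primal objective `Γ ↦ ⟨Γ, Q⟩ − log det CM(Γ)`; for `Q = Q(η)` it is the Lagrangian at the
multipliers `η`. -/
noncomputable def objective (Q Γ : Matrix (Fin d) (Fin d) ℝ) : ℝ :=
  sinner Γ Q - Real.log (CM Γ).det

theorem objective_gammaOf_lt {Q S Γ : Matrix (Fin d) (Fin d) ℝ} (hQ : memQ Q)
    (hS : isSigmaOf Q S) (hΓ : memC Γ) (hne : Γ ≠ gammaOf S) :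
    objective Q (gammaOf S) < objective Q Γ := by
  obtain ⟨T, hT, rfl⟩ := hΓ.exists_gammaOf_eq
  have : NeZero d := ⟨by rintro rfl; exact hne (Subsingleton.elim _ _)⟩
  have htrace : ((S + vecMulVec 1 1)⁻¹ * (T - S)).trace =
      sinner (gammaOf T) Q - sinner (gammaOf S) Q := by
    rw [hS.inv_add_vecMulVec_one hQ, sinner_gammaOf hQ.1 hQ.2.1 hT.isSymm,
      sinner_gammaOf hQ.1 hQ.2.1 hS.1]
    simp [add_mul, mul_sub, vecMulVec_mul, one_vecMul_eq_zero hS.1 hS.2.1,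
      one_vecMul_eq_zero hT.isSymm hT.mulVec_one, -vecMulVec_one, -one_vecMulVec]
  have hlog := log_det_lt_add_trace (hS.isCenteredPosDef hQ).posDef_add_vecMulVec_one
    hT.posDef_add_vecMulVec_one fun h => hne (congrArg gammaOf (add_right_cancel h))
  rw [add_sub_add_right_eq_sub, htrace] at hlog
  rw [objective, objective, det_CM_gammaOf hS.2.1, det_CM_gammaOf hT.mulVec_one]
  linarith

lemma of_triCoeff {i j k : Fin d} (hij : i ≠ j) (hik : i ≠ k) (hjk : j ≠ k) :
    (of (triCoeff i j k) : Matrix (Fin d) (Fin d) ℝ) =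
      (single i j 1 + single j i 1) - (single i k 1 + single k i 1)
        - (single j k 1 + single k j 1) := by
  ext a b
  simp only [of_apply, triCoeff, Matrix.sub_apply, Matrix.add_apply, single_apply]
  grind

lemma sinner_triCoeff {Γ : Matrix (Fin d) (Fin d) ℝ} (hΓ : Γ.IsSymm) (hΓ0 : ∀ i, Γ i i = 0)
    {i j k : Fin d} (hij : i ≠ j) (hik : i ≠ k) (hjk : j ≠ k) :
    sinner Γ (of (triCoeff i j k)) = Γ i j - Γ i k - Γ j k := by
  have hsymm : (of (triCoeff i j k) : Matrix (Fin d) (Fin d) ℝ).IsSymm := by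
    simp [of_triCoeff hij hik hjk, IsSymm, add_comm]
  have h := two_mul_sinner hΓ hsymm hΓ0
  simp only [of_triCoeff hij hik hjk, Matrix.mul_sub, Matrix.mul_add, trace_sub, trace_add,
    trace_mul_single, op_smul_eq_smul, one_smul, hΓ.apply i j, hΓ.apply i k, hΓ.apply j k] at h ⊢
  linarith

lemma sinner_Qeta (Γ Q : Matrix (Fin d) (Fin d) ℝ) (Ψ : Finset (Fin d × Fin d × Fin d))
    (η : Fin d × Fin d × Fin d → ℝ) :
    sinner Γ (Qeta Q Ψ η) =
      sinner Γ Q + ∑ t ∈ Ψ, η t * sinner Γ (of (triCoeff t.1 t.2.1 t.2.2)) := by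
  simp only [sinner, Qeta, of_apply, mul_add, sum_add_distrib, mul_sum]
  rw [sum_comm]
  simp only [mul_left_comm]

lemma objective_Qeta {Γ : Matrix (Fin d) (Fin d) ℝ} (hΓ : Γ.IsSymm) (hΓ0 : ∀ i, Γ i i = 0)
    (Q : Matrix (Fin d) (Fin d) ℝ) {Ψ : Finset (Fin d × Fin d × Fin d)}
    (hΨ : ∀ t ∈ Ψ, t.1 ≠ t.2.1 ∧ t.1 ≠ t.2.2 ∧ t.2.1 ≠ t.2.2) (η : Fin d × Fin d × Fin d → ℝ) :
    objective (Qeta Q Ψ η) Γ =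
      objective Q Γ + ∑ t ∈ Ψ, η t * (Γ t.1 t.2.1 - Γ t.1 t.2.2 - Γ t.2.1 t.2.2) := by
  have hsum : ∑ t ∈ Ψ, η t * sinner Γ (of (triCoeff t.1 t.2.1 t.2.2)) =
      ∑ t ∈ Ψ, η t * (Γ t.1 t.2.1 - Γ t.1 t.2.2 - Γ t.2.1 t.2.2) :=
    sum_congr rfl fun t ht => by
      obtain ⟨hij, hik, hjk⟩ := hΨ t ht
      rw [sinner_triCoeff hΓ hΓ0 hij hik hjk]
  rw [objective, objective, sinner_Qeta, hsum]
  ring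

end Optimality

/-- KKT sufficiency for step (S2): if `Q(η̌) ∈ 𝒬`, `Γ̌ = Γ(Q(η̌))` is primal feasible,
`η̌ ≥ 0`, and complementary slackness holds, then `Γ̌` is the unique minimizer of
`Γ ↦ ⟨Γ, Q̂⟩ − log det(CM(Γ))` over the feasible set
`{Γ ∈ 𝒞^d : Γ_{ij} ≤ Γ_{ik} + Γ_{jk} for all (i,j,k) ∈ Ψ}`. -/
theorem kkt_sufficiency {d : ℕ}
    (Qh : Matrix (Fin d) (Fin d) ℝ)
    (hQhsym : Qh.IsSymm) (hQhdiag : ∀ i, Qh i i = 0)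
    (Ψ : Finset (Fin d × Fin d × Fin d))
    (hΨ : ∀ t ∈ Ψ, t.1 ≠ t.2.1 ∧ t.1 ≠ t.2.2 ∧ t.2.1 ≠ t.2.2)
    (η : Fin d × Fin d × Fin d → ℝ)
    (hQη : memQ (Qeta Qh Ψ η))
    (S : Matrix (Fin d) (Fin d) ℝ) (hS : isSigmaOf (Qeta Qh Ψ η) S)
    (hprimal : ∀ t ∈ Ψ,
      gammaOf S t.1 t.2.1 ≤ gammaOf S t.1 t.2.2 + gammaOf S t.2.1 t.2.2)
    (hdual : ∀ t ∈ Ψ, 0 ≤ η t)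
    (hslack : ∑ t ∈ Ψ, η t *
      (gammaOf S t.1 t.2.1 - gammaOf S t.1 t.2.2 - gammaOf S t.2.1 t.2.2) = 0) :
    (memC (gammaOf S) ∧ ∀ t ∈ Ψ,
      gammaOf S t.1 t.2.1 ≤ gammaOf S t.1 t.2.2 + gammaOf S t.2.1 t.2.2) ∧
    (∀ Γ : Matrix (Fin d) (Fin d) ℝ,
      (memC Γ ∧ ∀ t ∈ Ψ, Γ t.1 t.2.1 ≤ Γ t.1 t.2.2 + Γ t.2.1 t.2.2) →
      (sinner (gammaOf S) Qh - Real.log ((CM (gammaOf S)).det) ≤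
          sinner Γ Qh - Real.log ((CM Γ).det) ∧
        (sinner Γ Qh - Real.log ((CM Γ).det) =
            sinner (gammaOf S) Qh - Real.log ((CM (gammaOf S)).det) →
          Γ = gammaOf S))) := by
  have hC : memC (gammaOf S) := (hS.isCenteredPosDef hQη).memC_gammaOf
  have hlt (Γ : Matrix (Fin d) (Fin d) ℝ) (hΓ : memC Γ)
      (hfeas : ∀ t ∈ Ψ, Γ t.1 t.2.1 ≤ Γ t.1 t.2.2 + Γ t.2.1 t.2.2) (hne : Γ ≠ gammaOf S) :
      objective Qh (gammaOf S) < objective Qh Γ := by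
    calc
      objective Qh (gammaOf S) = objective (Qeta Qh Ψ η) (gammaOf S) := by
        rw [objective_Qeta hC.1 hC.2.1 Qh hΨ, hslack, add_zero]
      _ < objective (Qeta Qh Ψ η) Γ := objective_gammaOf_lt hQη hS hΓ hne
      _ ≤ objective Qh Γ := by
        rw [objective_Qeta hΓ.1 hΓ.2.1 Qh hΨ, add_le_iff_nonpos_right]
        exact sum_nonpos fun t ht =>
          mul_nonpos_of_nonneg_of_nonpos (hdual t ht) (by linarith [hfeas t ht])
  refine ⟨⟨hC, hprimal⟩, fun Γ ⟨hΓ, hfeas⟩ => ?_⟩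
  obtain rfl | hne := eq_or_ne Γ (gammaOf S)
  · exact ⟨le_rfl, fun _ => rfl⟩
  · exact ⟨(hlt Γ hΓ hfeas hne).le, fun h => absurd h (hlt Γ hΓ hfeas hne).ne'⟩
end
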